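/- Fix k ≥ 2, m ≤ n, and let g₁, g₂ ∈ G_m be such that both g₁ and g₁·g₂ are minimal representatives. Set T = [g₁g₂]_H ∪ [g₁]_H. Then the multiplication map (h₁,h₂) ↦ h₁·h₂ is a bijection from the set of pairs (h₁,h₂), where h₁ is a block-preserving permutation with support contained in T that commutes with g₁g₂ and lies in g₁·H_T·g₁⁻¹ (H_T being the group of block-preserving permutations with support contained in T), and h₂ is a block-preserving permutation with support contained in {0,…,kn−1} ∖ T, onto the intersection C_{H_n}(g₁g₂) ∩ g₁·H_n·g₁⁻¹. In particular C_{H_n}(g₁g₂) ∩ g₁H_ng₁⁻¹ = (C_{H_T}(g₁g₂) ∩ g₁H_Tg₁⁻¹) ⊕ H_{{0,…,kn−1}∖T}. -/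

import Mathlib

/-!
A minimal representative `g` is the identity on every block that it maps onto a block, so its
`H`-support is the union of the blocks that `g` does not fix pointwise
(`MinimalRep.notMem_HSupport_iff`). Hence `T` is a union of blocks, lies in `{0, …, k*m-1}`, and
`g₁` and `g₁ * g₂` are the identity off `T`. Permutations supported off `T` therefore commute with
both, which makes multiplication well defined, and it is injective because the two factors have
disjoint supports.

For surjectivity, let `h = g₁ * h' * g₁⁻¹` be in the intersection. Both `h` and `h'` map blocks
onto blocks, as blocks are finite of equal size. Since `h` commutes with `g₁ * g₂`, it maps blocks
fixed by `g₁ * g₂` to blocks fixed by `g₁ * g₂` (`notMem_HSupport_of_commute`). If `g₁` fixes a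
block `Γ` pointwise, then `h '' Γ = g₁ '' (h' '' Γ)` exhibits a block `h' '' Γ` mapped by `g₁` onto
a block; minimality forces `g₁` to fix it, so that `h '' Γ = h' '' Γ` is again fixed by `g₁` and `h`
and `h'` agree on `Γ` (`notMem_HSupport_of_conj`). The same applies to `h⁻¹`, so `h` and `h'`
preserve `T`, and the restrictions of `h` to `T` and to its complement are the required factors.
-/

/-- A permutation of `ℕ` is block-preserving (for block size `k`) if elements lying in a
common block `Γ_i = {k*i, …, k*i+k-1}` are mapped to elements lying in a common block:
`⌊r/k⌋ = ⌊s/k⌋` implies `⌊h r/k⌋ = ⌊h s/k⌋`. -/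
def BlockPreserving (k : ℕ) (h : Equiv.Perm ℕ) : Prop :=
  ∀ r s : ℕ, r / k = s / k → h r / k = h s / k

/-- Membership in `G_n`: permutations of `ℕ` fixing every `r ≥ k*n`. -/
def InG (k n : ℕ) (g : Equiv.Perm ℕ) : Prop :=
  ∀ r : ℕ, k * n ≤ r → g r = r

/-- Membership in `H_n = S_k ≀ S_n`: block-preserving elements of `G_n`. -/
def InH (k n : ℕ) (h : Equiv.Perm ℕ) : Prop :=
  InG k n h ∧ BlockPreserving k h

/-- The `i`-th block `Γ_i = {k*i, …, k*i+k-1}`. -/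
def Block (k i : ℕ) : Set ℕ := {r | r / k = i}

/-- `g` is a minimal representative: (a) whenever `g` maps a block `Γ_i` onto a block
`Γ_j` then `i = j`; (b) whenever `p (g s) = p s` then `g s = s`. -/
def MinimalRep (k : ℕ) (g : Equiv.Perm ℕ) : Prop :=
  (∀ i j : ℕ, ⇑g '' Block k i = Block k j → i = j) ∧
  (∀ s : ℕ, g s / k = s / k → g s = s)

/-- The `H`-support `[g]_H` of `g`: the union of those blocks `Γ_i` whose image
`g(Γ_i)` is not equal to any block `Γ_j`. -/
def HSupport (k : ℕ) (g : Equiv.Perm ℕ) : Set ℕ :=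
  {r | ∀ j : ℕ, ⇑g '' Block k (r / k) ≠ Block k j}

/-- A block-preserving permutation maps each block onto a block, because blocks are finite and all
have the same cardinality `k`. -/
theorem BlockPreserving.image_block {k : ℕ} (hk : 0 < k) {h : Equiv.Perm ℕ}
    (hb : BlockPreserving k h) (r : ℕ) : h '' Block k (r / k) = Block k (h r / k) := by
  have hcard : ∀ i, Block k i = Set.Ico (k * i) (k * i + k) := by
    intro i
    ext x
    simp only [Block, Set.mem_ofPred_eq, Set.mem_Ico, Nat.div_eq_iff hk]
    rw [mul_comm i k]
    omega
  apply Set.eq_of_subset_of_ncard_le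
  · rintro _ ⟨s, hs, rfl⟩
    exact hb s r hs
  · rw [Set.ncard_image_of_injective _ h.injective, hcard, hcard]
    simp [Set.ncard_eq_toFinset_card']
  · rw [hcard]
    exact Set.finite_Ico _ _

theorem BlockPreserving.div_eq_iff {k : ℕ} (hk : 0 < k) {h : Equiv.Perm ℕ}
    (hb : BlockPreserving k h) (r s : ℕ) : h r / k = h s / k ↔ r / k = s / k := by
  refine ⟨fun e => ?_, hb r s⟩
  have hm : h r ∈ h '' Block k (s / k) := by
    rw [hb.image_block hk]
    exact e
  obtain ⟨t, ht, e'⟩ := hm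
  rw [← h.injective e']
  exact ht

theorem BlockPreserving.inv {k : ℕ} (hk : 0 < k) {h : Equiv.Perm ℕ}
    (hb : BlockPreserving k h) : BlockPreserving k h⁻¹ := by
  intro r s e
  rw [← hb.div_eq_iff hk]
  simpa using e

theorem BlockPreserving.mul {k : ℕ} {f h : Equiv.Perm ℕ}
    (hf : BlockPreserving k f) (hh : BlockPreserving k h) : BlockPreserving k (f * h) :=
  fun r s e => hf _ _ (hh r s e)

theorem InG.inv {k n : ℕ} {h : Equiv.Perm ℕ} (hh : InG k n h) : InG k n h⁻¹ := by
  intro r hr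
  rw [Equiv.Perm.inv_eq_iff_eq, hh r hr]

/-- The `H`-support of a minimal representative is the union of the blocks that it does not fix
pointwise. -/
theorem MinimalRep.notMem_HSupport_iff {k : ℕ} {g : Equiv.Perm ℕ} (hg : MinimalRep k g) (r : ℕ) :
    r ∉ HSupport k g ↔ ∀ s, s / k = r / k → g s = s := by
  constructor
  · intro h s hs
    simp only [HSupport, Set.mem_ofPred_eq, not_forall, not_not] at h
    obtain ⟨j, hj⟩ := h
    apply hg.2
    have hm : g s ∈ Block k j := hj ▸ ⟨s, hs, rfl⟩
    rw [hs, hg.1 _ _ hj]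
    exact hm
  · intro h hr
    apply hr (r / k)
    ext x
    constructor
    · rintro ⟨s, hs, rfl⟩
      rw [h s hs]
      exact hs
    · intro hx
      exact ⟨x, hx, h x hx⟩

theorem mem_HSupport_congr {k : ℕ} (g : Equiv.Perm ℕ) {r s : ℕ} (e : r / k = s / k) :
    r ∈ HSupport k g ↔ s ∈ HSupport k g := by
  simp only [HSupport, Set.mem_ofPred_eq, e]

theorem MinimalRep.apply_eq {k : ℕ} {g : Equiv.Perm ℕ} (hg : MinimalRep k g) {r : ℕ}
    (hr : r ∉ HSupport k g) : g r = r :=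
  (hg.notMem_HSupport_iff r).1 hr r rfl

theorem MinimalRep.lt_of_mem {k m : ℕ} (hk : 0 < k) {g : Equiv.Perm ℕ} (hg : MinimalRep k g)
    (hG : InG k m g) {r : ℕ} (hr : r ∈ HSupport k g) : r < k * m := by
  by_contra! hlt
  refine (hg.notMem_HSupport_iff r).2 (fun s hs => hG s ?_) hr
  rw [mul_comm, ← Nat.le_div_iff_mul_le hk] at hlt ⊢
  omega

theorem notMem_HSupport_of_commute {k : ℕ} (hk : 0 < k) {g h : Equiv.Perm ℕ}
    (hg : MinimalRep k g) (hh : BlockPreserving k h) (hc : h * g = g * h) {r : ℕ}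
    (hr : r ∉ HSupport k g) : h r ∉ HSupport k g := by
  rw [hg.notMem_HSupport_iff] at hr ⊢
  intro s hs
  obtain ⟨t, rfl⟩ := h.surjective s
  have e := DFunLike.congr_fun hc t
  simp only [Equiv.Perm.mul_apply] at e
  rw [← e, hr t ((hh.div_eq_iff hk _ _).1 hs)]

/-- If `h * g = g * h'` with `h`, `h'` block-preserving, then off the `H`-support of `g` the
permutations `h` and `h'` agree, and they preserve the complement of that `H`-support. -/
theorem notMem_HSupport_of_conj {k : ℕ} (hk : 0 < k) {g h h' : Equiv.Perm ℕ}
    (hg : MinimalRep k g) (hh : BlockPreserving k h) (hh' : BlockPreserving k h')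
    (hc : h * g = g * h') {r : ℕ} (hr : r ∉ HSupport k g) :
    h r ∉ HSupport k g ∧ h r = h' r := by
  have e : ∀ s, h (g s) = g (h' s) := fun s => DFunLike.congr_fun hc s
  have hfix := (hg.notMem_HSupport_iff r).1 hr
  have hr' : h' r ∉ HSupport k g := by
    intro hmem
    apply hmem (h r / k)
    rw [← hh'.image_block hk, ← hh.image_block hk, Set.image_image]
    refine Set.image_congr fun s hs => ?_
    rw [← e, hfix s hs]
  have heq : h r = h' r := by
    have := e r
    rwa [hfix r rfl, hg.apply_eq hr'] at this
  exact ⟨heq ▸ hr', heq⟩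

/-- A permutation preserving `T` can be cut off to be the identity outside `T`. -/
theorem exists_cutoff {T : Set ℕ} {h : Equiv.Perm ℕ} (hT : ∀ r, h r ∈ T ↔ r ∈ T) :
    ∃ f : Equiv.Perm ℕ, (∀ r ∈ T, f r = h r) ∧ ∀ r ∉ T, f r = r := by
  classical
  refine ⟨Equiv.Perm.ofSubtype (h.subtypePerm (p := (· ∈ T)) hT), fun r hr => ?_, fun r hr => ?_⟩
  · rw [Equiv.Perm.ofSubtype_apply_of_mem _ hr]
    rfl
  · exact Equiv.Perm.ofSubtype_apply_of_not_mem _ hr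

theorem BlockPreserving.cutoff {k : ℕ} {T : Set ℕ} {h f : Equiv.Perm ℕ}
    (hh : BlockPreserving k h) (hT : ∀ r s, r / k = s / k → (r ∈ T ↔ s ∈ T))
    (h₁ : ∀ r ∈ T, f r = h r) (h₂ : ∀ r ∉ T, f r = r) : BlockPreserving k f := by
  intro r s e
  by_cases hr : r ∈ T
  · rw [h₁ r hr, h₁ s ((hT r s e).1 hr)]
    exact hh r s e
  · rw [h₂ r hr, h₂ s (fun hs => hr ((hT r s e).2 hs))]
    exact e

theorem apply_mem_iff_of_fix {T : Set ℕ} {f : Equiv.Perm ℕ} (hf : ∀ r ∉ T, f r = r) (r : ℕ) :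
    f r ∈ T ↔ r ∈ T := by
  constructor
  · intro h
    by_contra hr
    exact hr (hf r hr ▸ h)
  · intro h
    by_contra hr
    rw [f.injective (hf _ hr)] at hr
    exact hr h

theorem mul_comm_of_fix {T : Set ℕ} {f g : Equiv.Perm ℕ} (hf : ∀ r ∉ T, f r = r)
    (hg : ∀ r ∈ T, g r = r) : f * g = g * f := by
  ext r
  simp only [Equiv.Perm.mul_apply]
  by_cases hr : r ∈ T
  · rw [hg r hr, hg _ ((apply_mem_iff_of_fix hf r).2 hr)]
  · rw [hf r hr]
    have := (apply_mem_iff_of_fix (T := Tᶜ) (f := g) (fun r hr => hg r (not_not.1 hr)) r).2 hr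
    rw [hf _ this]

/-- If `g` is the identity off `T`, the relation `h * g = g * h'` survives cutting `h` and `h'` off
to be the identity outside `T`. -/
theorem cutoff_conj {T : Set ℕ} {g h h' f f' : Equiv.Perm ℕ} (hg : ∀ r ∉ T, g r = r)
    (hc : h * g = g * h') (h₁ : ∀ r ∈ T, f r = h r) (h₂ : ∀ r ∉ T, f r = r)
    (h₁' : ∀ r ∈ T, f' r = h' r) (h₂' : ∀ r ∉ T, f' r = r) : f * g = g * f' := by
  ext r
  simp only [Equiv.Perm.mul_apply]
  by_cases hr : r ∈ T
  · rw [h₁ _ ((apply_mem_iff_of_fix hg r).2 hr), h₁' r hr]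
    exact DFunLike.congr_fun hc r
  · rw [hg r hr, h₂ r hr, h₂' r hr, hg r hr]

/-- Fix `k ≥ 2`, `m ≤ n`, and let `g₁, g₂ ∈ G_m` with `g₁` and
`g₁ * g₂` minimal representatives. Set `T = [g₁g₂]_H ∪ [g₁]_H`. Multiplication
`(h₁, h₂) ↦ h₁ * h₂` is a bijection from the set of pairs where
`h₁ ∈ C_{H_T}(g₁g₂) ∩ g₁·H_T·g₁⁻¹` and `h₂ ∈ H_{{0,…,kn−1} ∖ T}`,
onto `C_{H_n}(g₁g₂) ∩ g₁·H_n·g₁⁻¹`. -/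
theorem triple_intersection_direct_sum_decomposition (k m n : ℕ) (hk : 2 ≤ k)
    (hmn : m ≤ n) (g₁ g₂ : Equiv.Perm ℕ) (hg₁ : InG k m g₁) (hg₂ : InG k m g₂)
    (hmin₁ : MinimalRep k g₁) (hmin₁₂ : MinimalRep k (g₁ * g₂)) :
    Set.BijOn (fun p : Equiv.Perm ℕ × Equiv.Perm ℕ => p.1 * p.2)
      {p : Equiv.Perm ℕ × Equiv.Perm ℕ |
        (BlockPreserving k p.1 ∧
          (∀ r : ℕ, p.1 r ≠ r → r ∈ HSupport k (g₁ * g₂) ∪ HSupport k g₁) ∧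
          p.1 * (g₁ * g₂) = (g₁ * g₂) * p.1 ∧
          ∃ h' : Equiv.Perm ℕ, BlockPreserving k h' ∧
            (∀ r : ℕ, h' r ≠ r → r ∈ HSupport k (g₁ * g₂) ∪ HSupport k g₁) ∧
            p.1 = g₁ * h' * g₁⁻¹) ∧
        (BlockPreserving k p.2 ∧
          ∀ r : ℕ, p.2 r ≠ r →
            r < k * n ∧ r ∉ HSupport k (g₁ * g₂) ∪ HSupport k g₁)}
      {h : Equiv.Perm ℕ | InH k n h ∧ h * (g₁ * g₂) = (g₁ * g₂) * h ∧
        ∃ h' : Equiv.Perm ℕ, InH k n h' ∧ h = g₁ * h' * g₁⁻¹} := by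
  have hk0 : 0 < k := by omega
  set T := HSupport k (g₁ * g₂) ∪ HSupport k g₁ with hTdef
  set g := g₁ * g₂ with hgdef
  have hg : InG k m g := fun r hr => by
    rw [hgdef, Equiv.Perm.mul_apply, hg₂ r hr, hg₁ r hr]
  have hTblk : ∀ r s, r / k = s / k → (r ∈ T ↔ s ∈ T) := fun r s e =>
    or_congr (mem_HSupport_congr g e) (mem_HSupport_congr g₁ e)
  have hTg : ∀ r ∉ T, g r = r := fun r hr => hmin₁₂.apply_eq fun h => hr (Or.inl h)
  have hTg₁ : ∀ r ∉ T, g₁ r = r := fun r hr => hmin₁.apply_eq fun h => hr (Or.inr h)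
  have hTlt : ∀ r ∈ T, r < k * n := fun r hr =>
    lt_of_lt_of_le (hr.elim (hmin₁₂.lt_of_mem hk0 hg) (hmin₁.lt_of_mem hk0 hg₁))
      (Nat.mul_le_mul_left k hmn)
  refine ⟨?_, ?_, ?_⟩
  · rintro ⟨a, b⟩ ⟨⟨ha, haT, hac, a', ha', haT', hconj⟩, hb, hbT⟩
    dsimp only at *
    have hbfix : ∀ r ∈ T, b r = r := fun r hr => by
      by_contra h
      exact (hbT r h).2 hr
    have hbG : InG k n b := fun r hr => by
      by_contra h
      exact absurd (hbT r h).1 (by omega)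
    have hmulG : ∀ c : Equiv.Perm ℕ, (∀ r, c r ≠ r → r ∈ T) → InG k n (c * b) := by
      intro c hc r hr
      rw [Equiv.Perm.mul_apply, hbG r hr]
      by_contra h
      exact absurd (hTlt r (hc r h)) (by omega)
    have hbg : g * b = b * g := mul_comm_of_fix hTg hbfix
    have hbg₁ : g₁ * b = b * g₁ := mul_comm_of_fix hTg₁ hbfix
    refine ⟨⟨hmulG a haT, ha.mul hb⟩, ?_, a' * b, ⟨hmulG a' haT', ha'.mul hb⟩, ?_⟩
    · rw [mul_assoc, ← hbg, ← mul_assoc, hac, mul_assoc]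
    · have : b * g₁⁻¹ = g₁⁻¹ * b := by
        rw [mul_inv_eq_iff_eq_mul, mul_assoc, ← hbg₁, inv_mul_cancel_left]
      rw [hconj, mul_assoc _ _ b, ← this]
      simp only [mul_assoc]
  · rintro ⟨a, b⟩ ⟨⟨-, haT, -⟩, -, hbT⟩ ⟨c, d⟩ ⟨⟨-, hcT, -⟩, -, hdT⟩ heq
    dsimp only at *
    have key : ∀ x y : Equiv.Perm ℕ, (∀ r, x r ≠ r → r ∈ T) →
        (∀ r, y r ≠ r → r < k * n ∧ r ∉ T) → ∀ r ∉ T, (x * y) r = y r := by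
      intro x y hx hy r hr
      have hy' : y r ∈ Tᶜ := (apply_mem_iff_of_fix (T := Tᶜ) (fun s hs => by
        by_contra h
        exact hs (hy s h).2) r).2 hr
      rw [Equiv.Perm.mul_apply]
      by_contra h
      exact hy' (hx _ h)
    have hbd : b = d := by
      ext r
      by_cases hr : r ∈ T
      · have h₁ : b r = r := by
          by_contra h
          exact (hbT r h).2 hr
        have h₂ : d r = r := by
          by_contra h
          exact (hdT r h).2 hr
        rw [h₁, h₂]
      · rw [← key a b haT hbT r hr, ← key c d hcT hdT r hr, heq]
    subst hbd
    rw [mul_right_cancel heq]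
  · rintro h ⟨⟨hhG, hhB⟩, hcomm, h', ⟨hhG', hhB'⟩, hconj⟩
    have hc : h * g₁ = g₁ * h' := by rw [hconj, inv_mul_cancel_right]
    have hpres : ∀ x x' : Equiv.Perm ℕ, BlockPreserving k x → BlockPreserving k x' →
        x * g = g * x → x * g₁ = g₁ * x' → ∀ r ∉ T, x r ∉ T := by
      intro x x' hx hx' hxg hxg₁ r hr hmem
      rcases hmem with hmem | hmem
      · exact notMem_HSupport_of_commute hk0 hmin₁₂ hx hxg (fun h => hr (Or.inl h)) hmem
      · exact (notMem_HSupport_of_conj hk0 hmin₁ hx hx' hxg₁ (fun h => hr (Or.inr h))).1 hmem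
    have hagree : ∀ r ∉ T, h r = h' r := fun r hr =>
      (notMem_HSupport_of_conj hk0 hmin₁ hhB hhB' hc (fun h => hr (Or.inr h))).2
    have hinv : ∀ r ∉ T, h⁻¹ r ∉ T := by
      refine hpres h⁻¹ h'⁻¹ (hhB.inv hk0) (hhB'.inv hk0) ?_ ?_
      · rw [inv_mul_eq_iff_eq_mul, ← mul_assoc, hcomm, mul_inv_cancel_right]
      · rw [inv_mul_eq_iff_eq_mul, ← mul_assoc, hc, mul_inv_cancel_right]
    have hT : ∀ r, h r ∈ T ↔ r ∈ T := by
      intro r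
      refine ⟨fun hm => ?_, fun hm => ?_⟩
      · by_contra hr
        exact hpres h h' hhB hhB' hcomm hc r hr hm
      · by_contra hr
        have := hinv _ hr
        rw [show h⁻¹ (h r) = r from h.symm_apply_apply r] at this
        exact this hm
    have hT' : ∀ r, h' r ∈ T ↔ r ∈ T := by
      intro r
      refine ⟨fun hm => ?_, fun hm => ?_⟩
      · by_contra hr
        rw [← hagree r hr, hT] at hm
        exact hr hm
      · by_contra hr
        -- Here `h' r = h s = h' s` for `s = h⁻¹ (h' r) ∉ T`, so `r = s`.
        have hs := hinv _ hr
        have e := hagree _ hs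
        rw [show h (h⁻¹ (h' r)) = h' r from h.apply_symm_apply _] at e
        exact hs (h'.injective e ▸ hm)
    have hTc : ∀ r, h r ∈ Tᶜ ↔ r ∈ Tᶜ := fun r => not_congr (hT r)
    obtain ⟨a, ha₁, ha₂⟩ := exists_cutoff hT
    obtain ⟨a', ha₁', ha₂'⟩ := exists_cutoff hT'
    obtain ⟨b, hb₁, hb₂⟩ := exists_cutoff hTc
    refine ⟨(a, b), ⟨⟨hhB.cutoff hTblk ha₁ ha₂, fun r hr => ?_,
      cutoff_conj hTg hcomm ha₁ ha₂ ha₁ ha₂, a', hhB'.cutoff hTblk ha₁' ha₂', fun r hr => ?_, ?_⟩,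
      hhB.cutoff (fun r s e => not_congr (hTblk r s e)) hb₁ hb₂, fun r hr => ?_⟩, ?_⟩
    · by_contra hn
      exact hr (ha₂ r hn)
    · by_contra hn
      exact hr (ha₂' r hn)
    · exact eq_mul_inv_of_mul_eq (cutoff_conj hTg₁ hc ha₁ ha₂ ha₁' ha₂')
    · have hrT : r ∈ Tᶜ := by
        by_contra hn
        exact hr (hb₂ r hn)
      refine ⟨?_, hrT⟩
      by_contra! hlt
      exact hr ((hb₁ r hrT).trans (hhG r hlt))
    · ext r
      simp only [Equiv.Perm.mul_apply]
      by_cases hr : r ∈ T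
      · rw [hb₂ r (not_not.2 hr), ha₁ r hr]
      · rw [hb₁ r hr, ha₂ _ (fun hm => hr ((hT r).1 hm))]
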